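/- On a 6-dimensional hermitian inner product space (V, g, J, ω), for any k-form α with k ≥ 2, (ω∧ω)⎽(α∧ω) = 2(4-k) ω⎽α + ω ∧ ((ω∧ω)⎽α). -/

import Mathlib

namespace FormModel

/-- Components of a `p`-tensor on `ℝ^D` (forms are the alternating ones), with values in `R`. -/
abbrev Form (R : Type) (D p : ℕ) : Type := (Fin p → Fin D) → R

variable {R : Type} [Field R] {D : ℕ}

/-- A tensor is alternating (i.e. a form). -/
def IsAlt {p : ℕ} (α : Form R D p) : Prop :=
  ∀ (σ : Equiv.Perm (Fin p)) (i : Fin p → Fin D),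
    α (i ∘ σ) = ((Equiv.Perm.sign σ : ℤ) : R) * α i

/-- Reinterpret a `p`-form as a `q`-form when `p = q`. -/
def reindex {p q : ℕ} (h : p = q) (α : Form R D p) : Form R D q :=
  fun i => α (i ∘ Fin.cast h)

/-- Wedge product of forms, in components. -/
noncomputable def wedge {p q : ℕ} (α : Form R D p) (β : Form R D q) : Form R D (p + q) :=
  fun i => ((p.factorial * q.factorial : ℕ) : R)⁻¹ *
    ∑ σ : Equiv.Perm (Fin (p + q)), ((Equiv.Perm.sign σ : ℤ) : R) *
      α (fun j => i (σ (Fin.castAdd q j))) * β (fun j => i (σ (Fin.natAdd p j)))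

/-- Contraction `α ⌟ β` of a `k`-form with a `(k+p)`-form (indices raised with the Euclidean
metric): `(α ⌟ β)_{n₁…n_p} = (1/k!) α^{m₁…m_k} β_{m₁…m_k n₁…n_p}`. -/
noncomputable def contr {k p : ℕ} (α : Form R D k) (β : Form R D (k + p)) : Form R D p :=
  fun n => ((k.factorial : ℕ) : R)⁻¹ * ∑ m : Fin k → Fin D, α m * β (Fin.append m n)

/-- The totally antisymmetric `ε` symbol, i.e. the Euclidean volume form. -/
noncomputable def eps : Form R D D :=
  fun f => if h : Function.Injective f then
    ((Equiv.Perm.sign (Equiv.ofBijective f (Finite.injective_iff_bijective.mp h)) : ℤ) : R)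
  else 0

/-- Hodge star of a `p`-form (for `p + q = D`), induced by the Euclidean inner product and the
standard orientation: `(*α)_{n₁…n_q} = (1/p!) α^{m₁…m_p} ε_{m₁…m_p n₁…n_q}`. -/
noncomputable def hstar {p q : ℕ} (h : p + q = D) (α : Form R D p) : Form R D q :=
  fun n => ((p.factorial : ℕ) : R)⁻¹ *
    ∑ m : Fin p → Fin D, α m * eps (Fin.append m n ∘ Fin.cast h.symm)

/-- The action of an almost complex structure `J` (given by its matrix) on `p`-forms. -/
noncomputable def Jact {p : ℕ} (Jc : Matrix (Fin D) (Fin D) R) (α : Form R D p) : Form R D p :=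
  fun i => ∑ n : Fin p → Fin D, (∏ j, Jc (i j) (n j)) * α n

end FormModel

open FormModel

namespace LefAux

abbrev M : Type := (p : ℕ) → Form ℝ 6 p

/-- Interior product on the graded module. -/
noncomputable def io (a : Fin 6) : Module.End ℝ M where
  toFun F := fun p i => F (p + 1) (Fin.cons a i : Fin (p + 1) → Fin 6)
  map_add' F G := rfl
  map_smul' c F := rfl

noncomputable def exF (c : Fin 6) (F : M) : M
  | 0 => 0
  | p + 1 => fun i => ∑ r : Fin (p + 1),
      (-1 : ℝ) ^ (r : ℕ) * ((if c = i r then 1 else 0) * F p (fun k => i (r.succAbove k)))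

/-- Exterior multiplication by a basis covector. -/
noncomputable def ex (c : Fin 6) : Module.End ℝ M where
  toFun F := exF c F
  map_add' F G := by
    funext p
    cases p with
    | zero => simp [exF]
    | succ p =>
      funext i
      simp only [exF, Pi.add_apply, ← Finset.sum_add_distrib]
      exact Finset.sum_congr rfl fun _ _ => by ring
  map_smul' c F := by
    funext p
    cases p with
    | zero => simp [exF]
    | succ p =>
      funext i
      simp only [exF, Pi.smul_apply, smul_eq_mul, RingHom.id_apply, Finset.mul_sum]
      exact Finset.sum_congr rfl fun _ _ => by ring

lemma io_apply (a : Fin 6) (F : M) (p : ℕ) (i : Fin p → Fin 6) :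
    io a F p i = F (p + 1) (Fin.cons a i : Fin (p + 1) → Fin 6) := rfl

lemma ex_zero (c : Fin 6) (F : M) : ex c F 0 = 0 := rfl

lemma ex_succ (c : Fin 6) (F : M) (p : ℕ) (i : Fin (p + 1) → Fin 6) :
    ex c F (p + 1) i = ∑ r : Fin (p + 1),
      (-1 : ℝ) ^ (r : ℕ) * ((if c = i r then 1 else 0) * F p (fun k => i (r.succAbove k))) := rfl

def dl (a c : Fin 6) : ℝ := if c = a then 1 else 0

lemma io_ex (a c : Fin 6) : io a * ex c = dl a c • 1 - ex c * io a := by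
  ext F p i
  simp only [Module.End.mul_apply, LinearMap.sub_apply, LinearMap.smul_apply,
    Module.End.one_apply, Pi.sub_apply, Pi.smul_apply, smul_eq_mul]
  rw [io_apply, ex_succ, Fin.sum_univ_succ]
  rw [sub_eq_add_neg]
  congr 1
  · simp [dl]
  · cases p with
    | zero => simp [ex_zero]
    | succ p =>
      rw [ex_succ, ← Finset.sum_neg_distrib]
      refine Finset.sum_congr rfl fun r _ => ?_
      rw [io_apply]
      have : (fun k => (Fin.cons a i : Fin (p + 1 + 1) → Fin 6) (r.succ.succAbove k))
          = (Fin.cons a (fun k => i (r.succAbove k)) : Fin (p + 1) → Fin 6) := by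
        funext k
        refine Fin.cases ?_ (fun k => ?_) k <;> simp
      rw [this]
      simp only [pow_succ, Fin.val_succ, Fin.cons_succ]
      ring

variable (w : Fin 6 → Fin 6 → ℝ)

noncomputable def Lam : Module.End ℝ M := (1 / 2 : ℝ) • ∑ a, ∑ b, w a b • (io b * io a)
noncomputable def Lef : Module.End ℝ M := (1 / 2 : ℝ) • ∑ c, ∑ d, w c d • (ex c * ex d)
noncomputable def Num : Module.End ℝ M := ∑ a, ex a * io a

lemma comm4 (a b c d : Fin 6) :
    io b * io a * (ex c * ex d) = ex c * ex d * (io b * io a)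
      + (dl a c * dl b d) • 1 - (dl a d * dl b c) • 1
      - dl a c • (ex d * io b) + dl a d • (ex c * io b)
      + dl b c • (ex d * io a) - dl b d • (ex c * io a) := by
  have e1 : io b * io a * (ex c * ex d) = io b * (io a * ex c) * ex d := by noncomm_ring
  have e2 : io b * (ex c * io a) * ex d = (io b * ex c) * (io a * ex d) := by noncomm_ring
  have e3 : ex c * io b * (ex d * io a) = ex c * (io b * ex d) * io a := by noncomm_ring
  rw [e1, io_ex a c, mul_sub, sub_mul, e2, io_ex b c, io_ex a d]
  simp only [sub_mul, mul_sub, smul_mul_assoc, mul_smul_comm, mul_one, one_mul]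
  rw [e3, io_ex b d]
  simp only [sub_mul, mul_sub, smul_mul_assoc, mul_smul_comm, mul_one, smul_sub,
    smul_smul, mul_assoc]
  module

lemma sum_dl (f : Fin 6 → Module.End ℝ M) (a : Fin 6) : ∑ c, dl a c • f c = f a := by
  simp [dl]

lemma sum4_comm {X : Type} [AddCommMonoid X] {m n k l : ℕ}
    (f : Fin m → Fin n → Fin k → Fin l → X) :
    ∑ c, ∑ d, ∑ r, ∑ s, f c d r s = ∑ r, ∑ s, ∑ c, ∑ d, f c d r s := by
  calc ∑ c, ∑ d, ∑ r, ∑ s, f c d r s = ∑ c, ∑ r, ∑ d, ∑ s, f c d r s :=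
        Finset.sum_congr rfl fun c _ => Finset.sum_comm
    _ = ∑ r, ∑ c, ∑ d, ∑ s, f c d r s := Finset.sum_comm
    _ = ∑ r, ∑ c, ∑ s, ∑ d, f c d r s :=
        Finset.sum_congr rfl fun r _ => Finset.sum_congr rfl fun c _ => Finset.sum_comm
    _ = _ := Finset.sum_congr rfl fun r _ => Finset.sum_comm

lemma lam_lef (h1 : ∀ a b, w b a = - w a b)
    (h2 : ∀ b d, ∑ a, w a b * w a d = if d = b then 1 else 0) :
    Lam w * Lef w = Lef w * Lam w + (3 : ℝ) • 1 - Num := by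
  have h3 : ∀ b d, ∑ a, w b a * w d a = if d = b then 1 else 0 := by
    intro b d
    rw [← h2 b d]
    exact Finset.sum_congr rfl fun a _ => by rw [h1 a b, h1 a d]; ring
  have hs : ∑ a, ∑ b, w a b * w a b = 6 := by
    rw [Finset.sum_comm]
    simp [h2]
  -- expanded products
  have hA : Lam w * Lef w = (1 / 4 : ℝ) • ∑ a, ∑ b, ∑ c, ∑ d,
      (w a b * w c d) • (io b * io a * (ex c * ex d)) := by
    simp only [Lam, Lef, smul_mul_assoc, mul_smul_comm, Finset.sum_mul, Finset.mul_sum,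
      Finset.smul_sum, smul_smul]
    refine (sum4_comm _).trans ?_
    refine Finset.sum_congr rfl fun a _ => Finset.sum_congr rfl fun b _ =>
      Finset.sum_congr rfl fun c _ => Finset.sum_congr rfl fun d _ => ?_
    congr 1; ring
  have hB : Lef w * Lam w = (1 / 4 : ℝ) • ∑ a, ∑ b, ∑ c, ∑ d,
      (w a b * w c d) • (ex c * ex d * (io b * io a)) := by
    simp only [Lam, Lef, smul_mul_assoc, mul_smul_comm, Finset.sum_mul, Finset.mul_sum,
      Finset.smul_sum, smul_smul]
    refine Finset.sum_congr rfl fun a _ => Finset.sum_congr rfl fun b _ =>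
      Finset.sum_congr rfl fun c _ => Finset.sum_congr rfl fun d _ => ?_
    congr 1; ring
  have t1 : ∑ a, ∑ b, ∑ c, ∑ d, (w a b * w c d * (dl a c * dl b d)) = 6 := by
    rw [← hs]
    refine Finset.sum_congr rfl fun a _ => Finset.sum_congr rfl fun b _ => ?_
    simp [dl]
  have t2 : ∑ a, ∑ b, ∑ c, ∑ d, (w a b * w c d * (dl a d * dl b c)) = -6 := by
    rw [← hs, ← Finset.sum_neg_distrib]
    refine Finset.sum_congr rfl fun a _ => ?_
    rw [← Finset.sum_neg_distrib]
    refine Finset.sum_congr rfl fun b _ => ?_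
    simp [dl]
    rw [h1 a b]; ring
  have q2 : ∀ f : Fin 6 → Fin 6 → Module.End ℝ M,
      ∑ b, ∑ d, (∑ a, w a b * w a d) • f b d = ∑ b, f b b := by
    intro f
    simp [h2]
  have q3 : ∀ f : Fin 6 → Fin 6 → Module.End ℝ M,
      ∑ b, ∑ d, (∑ a, w b a * w d a) • f b d = ∑ b, f b b := by
    intro f
    simp [h3]
  have r1 : ∀ f : Fin 6 → Fin 6 → Fin 6 → Module.End ℝ M,
      ∑ a, ∑ b, ∑ d, f a b d = ∑ b, ∑ d, ∑ a, f a b d := by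
    intro f
    rw [Finset.sum_comm]
    exact Finset.sum_congr rfl fun b _ => Finset.sum_comm
  have r2 : ∀ f : Fin 6 → Fin 6 → Fin 6 → Module.End ℝ M,
      ∑ b, ∑ a, ∑ d, f a b d = ∑ b, ∑ d, ∑ a, f a b d := by
    intro f
    exact Finset.sum_congr rfl fun b _ => Finset.sum_comm
  have t3 : ∑ a, ∑ b, ∑ c, ∑ d, (w a b * w c d * dl a c) • (ex d * io b) = Num := by
    rw [Num, ← q2 (fun b d => ex d * io b)]
    simp only [Finset.sum_smul]
    refine Eq.trans ?_ (r1 _)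
    refine Finset.sum_congr rfl fun a _ => Finset.sum_congr rfl fun b _ => ?_
    rw [Finset.sum_comm]
    refine Finset.sum_congr rfl fun d _ => ?_
    simp [dl]
  have t4 : ∑ a, ∑ b, ∑ c, ∑ d, (w a b * w c d * dl a d) • (ex c * io b) = - Num := by
    rw [Num, ← q2 (fun b d => ex d * io b)]
    simp only [Finset.sum_smul]
    refine Eq.trans ?_ (congrArg Neg.neg (r1 _))
    simp only [← Finset.sum_neg_distrib]
    refine Finset.sum_congr rfl fun a _ => Finset.sum_congr rfl fun b _ =>
      Finset.sum_congr rfl fun d _ => ?_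
    simp [dl, h1 a d]
    module
  have t5 : ∑ a, ∑ b, ∑ c, ∑ d, (w a b * w c d * dl b c) • (ex d * io a) = - Num := by
    rw [Num, ← q3 (fun b d => ex d * io b)]
    simp only [Finset.sum_smul]
    refine Eq.trans ?_ (congrArg Neg.neg (r2 _))
    simp only [← Finset.sum_neg_distrib]
    refine Finset.sum_congr rfl fun a _ => Finset.sum_congr rfl fun b _ => ?_
    rw [Finset.sum_comm]
    refine Finset.sum_congr rfl fun d _ => ?_
    simp [dl, h1 d b]
    module
  have t6 : ∑ a, ∑ b, ∑ c, ∑ d, (w a b * w c d * dl b d) • (ex c * io a) = Num := by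
    rw [Num, ← q3 (fun b d => ex d * io b)]
    simp only [Finset.sum_smul]
    refine Eq.trans ?_ (r2 _)
    refine Finset.sum_congr rfl fun a _ => Finset.sum_congr rfl fun b _ =>
      Finset.sum_congr rfl fun d _ => ?_
    simp [dl]
  rw [hA, hB]
  simp only [comm4, smul_add, smul_sub, smul_smul, Finset.sum_add_distrib, Finset.sum_sub_distrib]
  rw [t3, t4, t5, t6]
  simp only [← Finset.sum_smul]
  rw [t1, t2]
  module

/-! Alternation. -/

def ext1 {p : ℕ} (e : Equiv.Perm (Fin p)) : Equiv.Perm (Fin (p + 1)) :=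
  Equiv.Perm.decomposeFin.symm (0, e)

lemma ext1_zero {p : ℕ} (e : Equiv.Perm (Fin p)) : ext1 e 0 = 0 := by simp [ext1]
lemma ext1_succ {p : ℕ} (e : Equiv.Perm (Fin p)) (k : Fin p) : ext1 e k.succ = (e k).succ := by
  simp [ext1]
lemma ext1_sign {p : ℕ} (e : Equiv.Perm (Fin p)) :
    Equiv.Perm.sign (ext1 e) = Equiv.Perm.sign e := by
  simp [ext1]

def AltM (F : M) : Prop := ∀ p, IsAlt (F p)

lemma altM_io {F : M} (h : AltM F) (a : Fin 6) : AltM (io a F) := by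
  intro p σ i
  rw [io_apply, io_apply, ← ext1_sign σ, ← h]
  congr 1
  funext k
  refine Fin.cases ?_ (fun k => ?_) k <;> simp [ext1_zero, ext1_succ]

lemma altM_zero : AltM 0 := by intro p σ i; simp
lemma altM_add {F G : M} (h : AltM F) (h' : AltM G) : AltM (F + G) := by
  intro p σ i
  simp only [Pi.add_apply, h p σ i, h' p σ i]; ring
lemma altM_smul {F : M} (h : AltM F) (c : ℝ) : AltM (c • F) := by
  intro p σ i
  simp only [Pi.smul_apply, h p σ i, smul_eq_mul]; ring
lemma altM_sum {ι : Type} (s : Finset ι) (F : ι → M) (h : ∀ x, AltM (F x)) :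
    AltM (∑ x ∈ s, F x) := by
  classical
  induction s using Finset.induction_on with
  | empty => simpa using altM_zero
  | insert a s ha ih => rw [Finset.sum_insert ha]; exact altM_add (h a) ih

lemma altM_Lam {F : M} (h : AltM F) : AltM (Lam w F) := by
  simp only [Lam, LinearMap.smul_apply, LinearMap.sum_apply, Module.End.mul_apply]
  exact altM_smul (altM_sum _ _ fun a => altM_sum _ _ fun b =>
    altM_smul (altM_io (altM_io h a) b) _) _

lemma comp_cyc {p : ℕ} (i : Fin (p + 1) → Fin 6) (r : Fin (p + 1)) (e : Equiv.Perm (Fin p)) :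
    i ∘ (r.cycleRange.symm * ext1 e : Equiv.Perm (Fin (p + 1))) =
      (Fin.cons (i r) ((fun k => i (r.succAbove k)) ∘ e) : Fin (p + 1) → Fin 6) := by
  funext k
  refine Fin.cases ?_ (fun k => ?_) k <;>
    simp [ext1_zero, ext1_succ]

lemma sign_cyc {p : ℕ} (r : Fin (p + 1)) (e : Equiv.Perm (Fin p)) :
    ((Equiv.Perm.sign (r.cycleRange.symm * ext1 e : Equiv.Perm (Fin (p + 1))) : ℤ) : ℝ)
      = (-1) ^ (r : ℕ) * ((Equiv.Perm.sign e : ℤ) : ℝ) := by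
  simp [ext1_sign, Fin.sign_cycleRange]

lemma num_apply {F : M} (p : ℕ) (h : IsAlt (F p)) : Num F p = (p : ℝ) • F p := by
  cases p with
  | zero => 
    funext i
    simp [Num, LinearMap.sum_apply, Finset.sum_apply, ex_zero]
  | succ p =>
    funext i
    simp only [Num, LinearMap.sum_apply, Finset.sum_apply, Module.End.mul_apply, ex_succ, io_apply]
    rw [Finset.sum_comm]
    have : ∀ r : Fin (p + 1), (∑ a : Fin 6, (-1 : ℝ) ^ (r : ℕ) * ((if a = i r then 1 else 0) *
        F (p + 1) (Fin.cons a fun k => i (r.succAbove k)))) = F (p + 1) i := by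
      intro r
      have h1 := h (r.cycleRange.symm * ext1 1) i
      rw [comp_cyc, sign_cyc] at h1
      simp only [Equiv.Perm.coe_one, Function.comp_id, Equiv.Perm.sign_one] at h1
      simp [h1, ← mul_assoc, ← mul_pow]
    rw [Finset.sum_congr rfl fun r _ => this r]
    simp

/-- Antisymmetrization. -/
noncomputable def Asym {p : ℕ} (T : Form ℝ 6 p) : Form ℝ 6 p :=
  fun i => ∑ σ : Equiv.Perm (Fin p), ((Equiv.Perm.sign σ : ℤ) : ℝ) * T (i ∘ σ)

lemma sgn_sq {p : ℕ} (σ : Equiv.Perm (Fin p)) :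
    ((Equiv.Perm.sign σ : ℤ) : ℝ) * ((Equiv.Perm.sign σ : ℤ) : ℝ) = 1 := by
  rw [← Int.cast_mul, Int.units_coe_mul_self, Int.cast_one]

lemma asym_alt {p : ℕ} (T : Form ℝ 6 p) : IsAlt (Asym T) := by
  intro τ i
  simp only [Asym]
  rw [Finset.mul_sum, ← Equiv.sum_comp (Equiv.mulLeft τ)
    (fun σ => ((Equiv.Perm.sign τ : ℤ) : ℝ) * (((Equiv.Perm.sign σ : ℤ) : ℝ) * T (i ∘ σ)))]
  refine Finset.sum_congr rfl fun σ _ => ?_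
  have := sgn_sq τ
  simp only [Equiv.coe_mulLeft, Equiv.Perm.sign_mul, Units.val_mul, Int.cast_mul,
    Equiv.Perm.coe_mul, Function.comp_assoc]
  linear_combination (- ((Equiv.Perm.sign σ : ℤ) : ℝ) * T (i ∘ τ ∘ σ)) * this

lemma asym_comp {p : ℕ} (T : Form ℝ 6 p) (τ : Equiv.Perm (Fin p)) :
    Asym (fun i => T (i ∘ τ)) = ((Equiv.Perm.sign τ : ℤ) : ℝ) • Asym T := by
  funext i
  simp only [Asym, Pi.smul_apply, smul_eq_mul]
  rw [Finset.mul_sum, ← Equiv.sum_comp (Equiv.mulRight τ)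
    (fun σ => ((Equiv.Perm.sign τ : ℤ) : ℝ) * (((Equiv.Perm.sign σ : ℤ) : ℝ) * T (i ∘ σ)))]
  refine Finset.sum_congr rfl fun σ _ => ?_
  have := sgn_sq τ
  simp only [Equiv.coe_mulRight, Equiv.Perm.sign_mul, Units.val_mul, Int.cast_mul,
    Equiv.Perm.coe_mul, Function.comp_assoc]
  linear_combination (- ((Equiv.Perm.sign σ : ℤ) : ℝ) * T (i ∘ σ ∘ τ)) * this

lemma asym_of_alt {p : ℕ} (T : Form ℝ 6 p) (h : IsAlt T) :
    Asym T = (p.factorial : ℝ) • T := by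
  funext i
  simp only [Asym, h _ i, ← mul_assoc, sgn_sq, Pi.smul_apply, smul_eq_mul]
  simp [Fintype.card_perm]

lemma asym_smul {p : ℕ} (c : ℝ) (T : Form ℝ 6 p) : Asym (fun i => c * T i) = c • Asym T := by
  funext i
  simp only [Asym, Pi.smul_apply, smul_eq_mul, Finset.mul_sum]
  exact Finset.sum_congr rfl fun _ _ => by ring

lemma asym_succ {p : ℕ} (T : Form ℝ 6 (p + 1)) (i : Fin (p + 1) → Fin 6) :
    Asym T i = ∑ r : Fin (p + 1), (-1 : ℝ) ^ (r : ℕ) *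
      Asym (fun x : Fin p → Fin 6 => T (Fin.cons (i r) x)) (fun k => i (r.succAbove k)) := by
  have hb : Function.Bijective (fun x : Fin (p + 1) × Equiv.Perm (Fin p) =>
      (x.1.cycleRange.symm * ext1 x.2 : Equiv.Perm (Fin (p + 1)))) := by
    rw [Fintype.bijective_iff_injective_and_card]
    constructor
    · rintro ⟨r, e⟩ ⟨s, f⟩ h
      simp only at h
      have h0 := congrArg (fun t : Equiv.Perm (Fin (p + 1)) => t 0) h
      simp [ext1_zero] at h0
      subst h0
      have h1 := mul_left_cancel h
      simpa [ext1] using h1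
    · simp [Fintype.card_perm, Nat.factorial_succ]
  simp only [Asym]
  rw [← Function.Bijective.sum_comp hb
    (fun σ => ((Equiv.Perm.sign σ : ℤ) : ℝ) * T (i ∘ σ)), Fintype.sum_prod_type]
  refine Finset.sum_congr rfl fun r _ => ?_
  rw [Finset.mul_sum]
  refine Finset.sum_congr rfl fun e _ => ?_
  simp only [sign_cyc, comp_cyc, mul_assoc]

/-- The model tensor `ω ⊗ α`. -/
def ten {p : ℕ} (α : Form ℝ 6 p) : Form ℝ 6 (p + 2) :=
  fun i => w (i 0) (i 1) * α (fun k => i k.succ.succ)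

lemma lef_apply (F : M) (p : ℕ) (h : IsAlt (F p)) :
    Lef w F (p + 2) = ((2 * p.factorial : ℕ) : ℝ)⁻¹ • Asym (ten w (F p)) := by
  funext i
  have hp : (p.factorial : ℝ) ≠ 0 := by positivity
  simp only [Lef, LinearMap.smul_apply, LinearMap.sum_apply, Pi.smul_apply, Finset.sum_apply,
    Module.End.mul_apply, smul_eq_mul]
  rw [asym_succ]
  simp only [asym_succ (p := p)]
  have hT : ∀ x y : Fin 6, Asym (fun z : Fin p → Fin 6 =>
      ten w (F p) (Fin.cons x (Fin.cons y z : Fin (p + 1) → Fin 6)))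
      = (w x y * p.factorial) • F p := by
    intro x y
    have : (fun z : Fin p → Fin 6 =>
      ten w (F p) (Fin.cons x (Fin.cons y z : Fin (p + 1) → Fin 6)))
      = fun z => w x y * F p z := by
      funext z
      simp only [ten, Fin.cons_succ]
      rfl
    rw [this, asym_smul, asym_of_alt _ h, smul_smul]
  simp only [hT, Pi.smul_apply, smul_eq_mul]
  simp only [ex_succ, Finset.mul_sum]
  have e1 : ∀ (f : Fin 6 → Fin 6 → Fin (p + 2) → Fin (p + 1) → ℝ),
      ∑ c, ∑ d, ∑ r, ∑ s, f c d r s = ∑ r, ∑ s, ∑ c, ∑ d, f c d r s := by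
    intro f
    calc ∑ c, ∑ d, ∑ r, ∑ s, f c d r s = ∑ c, ∑ r, ∑ d, ∑ s, f c d r s :=
          Finset.sum_congr rfl fun c _ => Finset.sum_comm
      _ = ∑ r, ∑ c, ∑ d, ∑ s, f c d r s := Finset.sum_comm
      _ = ∑ r, ∑ c, ∑ s, ∑ d, f c d r s :=
          Finset.sum_congr rfl fun r _ => Finset.sum_congr rfl fun c _ => Finset.sum_comm
      _ = _ := Finset.sum_congr rfl fun r _ => Finset.sum_comm
  rw [e1]
  refine Finset.sum_congr rfl fun r _ => Finset.sum_congr rfl fun s _ => ?_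
  simp
  field_simp

lemma reindex_M (F : M) {p q : ℕ} (h : p = q) : reindex h (F p) = F q := by
  subst h; rfl

lemma reindex_asym {p q : ℕ} (h : p = q) (T : Form ℝ 6 p) :
    reindex h (Asym T) = Asym (reindex h T) := by
  subst h; rfl

lemma reindex_smul {p q : ℕ} (h : p = q) (c : ℝ) (T : Form ℝ 6 p) :
    reindex h (c • T) = c • reindex h T := rfl

variable {w} {ω : Form ℝ 6 2}

lemma wedge_asym {p q : ℕ} (α : Form ℝ 6 p) (β : Form ℝ 6 q) :
    wedge α β = ((p.factorial * q.factorial : ℕ) : ℝ)⁻¹ • Asym (fun i =>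
      α (fun j => i (Fin.castAdd q j)) * β (fun j => i (Fin.natAdd p j))) := by
  funext i
  simp only [wedge, Asym, Pi.smul_apply, smul_eq_mul, mul_assoc]
  rfl

lemma wedge_left (hw : ∀ i, ω i = w (i 0) (i 1)) (F : M) (p : ℕ) (h : IsAlt (F p)) :
    wedge ω (F p) = Lef w F (2 + p) := by
  rw [← reindex_M (Lef w F) (show p + 2 = 2 + p by omega), lef_apply _ _ _ h, wedge_asym,
    reindex_smul, reindex_asym]
  congr 2
  funext i
  simp only [reindex, ten, hw, Function.comp]
  congr 2
  funext k
  congr 1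
  ext; simp; omega

lemma wedge_right (hw : ∀ i, ω i = w (i 0) (i 1)) (F : M) (p : ℕ) (h : IsAlt (F p)) :
    wedge (F p) ω = Lef w F (p + 2) := by
  rw [lef_apply _ _ _ h, wedge_asym]
  have : ten w (F p) = fun i => (fun i : Fin (p + 2) → Fin 6 => F p (fun j => i (Fin.castAdd 2 j)) *
      ω (fun j => i (Fin.natAdd p j))) (i ∘ (finRotate (p + 2) ^ 2 : Equiv.Perm (Fin (p + 2)))) := by
    funext i
    have g : ∀ (k : ℕ) (hk : k < p), (finRotate (p + 2) ^ 2 : Equiv.Perm (Fin (p + 2)))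
        ⟨k, by omega⟩ = ⟨k + 2, by omega⟩ := by
      intro k hk
      rw [pow_two, Equiv.Perm.mul_apply, finRotate_of_lt (n := p + 1) (k := k) (by omega),
        finRotate_of_lt (n := p + 1) (k := k + 1) (by omega)]
    have g0 : (finRotate (p + 2) ^ 2 : Equiv.Perm (Fin (p + 2))) ⟨p, by omega⟩ = 0 := by
      rw [pow_two, Equiv.Perm.mul_apply,
        finRotate_of_lt (n := p + 1) (k := p) (by omega)]
      exact finRotate_last'
    have g1 : (finRotate (p + 2) ^ 2 : Equiv.Perm (Fin (p + 2))) ⟨p + 1, by omega⟩ = 1 := by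
      rw [pow_two, Equiv.Perm.mul_apply, finRotate_last',
        finRotate_of_lt (n := p + 1) (k := 0) (by omega)]
      rfl
    have k0 : Fin.natAdd p (0 : Fin 2) = ⟨p, by omega⟩ := rfl
    have k1 : Fin.natAdd p (1 : Fin 2) = ⟨p + 1, by omega⟩ := rfl
    simp only [ten, hw, Function.comp, k0, k1, g0, g1]
    rw [mul_comm]
    congr 2
    funext k
    exact congrArg i (g k k.2).symm
  have key : ∀ T : Form ℝ 6 (p + 2), (ten w (F p) = fun i =>
      T (i ∘ (finRotate (p + 2) ^ 2 : Equiv.Perm (Fin (p + 2))))) →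
      Asym (ten w (F p)) = Asym T := by
    intro T hT
    rw [hT, asym_comp]
    simp
  rw [key (fun i : Fin (p + 2) → Fin 6 => F p (fun j => i (Fin.castAdd 2 j)) *
      ω (fun j => i (Fin.natAdd p j))) this]
  simp [mul_comm]

lemma lam_apply (F : M) (p : ℕ) (n : Fin p → Fin 6) :
    Lam w F p n = (1 / 2) * ∑ a, ∑ b, w a b *
      F (p + 2) (Fin.cons a (Fin.cons b n : Fin (p + 1) → Fin 6) : Fin (p + 2) → Fin 6) := by
  simp [Lam, LinearMap.sum_apply, Finset.sum_apply, io_apply]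

lemma lam_local (F G : M) (p : ℕ) (h : F (p + 2) = G (p + 2)) : Lam w F p = Lam w G p := by
  funext n
  rw [lam_apply, lam_apply, h]

lemma sum_cons {n : ℕ} (f : (Fin (n + 1) → Fin 6) → ℝ) :
    ∑ m, f m = ∑ a, ∑ m : Fin n → Fin 6, f (Fin.cons a m) := by
  rw [← (Fin.consEquiv (fun _ : Fin (n + 1) => Fin 6)).sum_comp, Fintype.sum_prod_type]
  rfl

lemma sum_two (f : (Fin 2 → Fin 6) → ℝ) : ∑ m, f m = ∑ a, ∑ b, f ![a, b] := by
  rw [sum_cons]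
  simp only [sum_cons]
  simp
  rfl

lemma sum_four (f : (Fin 4 → Fin 6) → ℝ) :
    ∑ m, f m = ∑ a, ∑ b, ∑ c, ∑ d, f ![a, b, c, d] := by
  rw [sum_cons]
  simp only [sum_cons]
  simp
  rfl

lemma contr_two (hw : ∀ i, ω i = w (i 0) (i 1)) (F : M) (p : ℕ) :
    contr ω (F (2 + p)) = Lam w F p := by
  funext n
  rw [lam_apply, contr, sum_two, ← reindex_M F (show p + 2 = 2 + p by omega)]
  simp only [hw, reindex]
  have : ∀ a b : Fin 6, Fin.append ![a, b] n ∘ Fin.cast (show p + 2 = 2 + p by omega)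
      = (Fin.cons a (Fin.cons b n : Fin (p + 1) → Fin 6) : Fin (p + 2) → Fin 6) := by
    intro a b
    funext k
    refine Fin.cases ?_ (fun k => Fin.cases ?_ (fun k => ?_) k) k
    · exact Fin.append_left ![a, b] n 0
    · exact Fin.append_left ![a, b] n 1
    · have : Fin.cast (show p + 2 = 2 + p by omega) k.succ.succ = Fin.natAdd 2 k := by
        ext; simp; omega
      simp [this]
  simp [this]

lemma alt_append {k p : ℕ} (β : Form ℝ 6 (k + p)) (h : IsAlt β) (σ : Equiv.Perm (Fin k))
    (m : Fin k → Fin 6) (n : Fin p → Fin 6) :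
    β (Fin.append (m ∘ σ) n) = ((Equiv.Perm.sign σ : ℤ) : ℝ) * β (Fin.append m n) := by
  have := h (finSumFinEquiv.permCongr (Equiv.Perm.sumCongr σ 1)) (Fin.append m n)
  rw [Equiv.Perm.sign_permCongr, Equiv.Perm.sign_sumCongr, Equiv.Perm.sign_one, mul_one] at this
  rw [← this]
  congr 1
  funext x
  refine Fin.addCases (fun x => ?_) (fun x => ?_) x <;> simp

lemma contr_asym {k p : ℕ} (T : Form ℝ 6 k) (β : Form ℝ 6 (k + p)) (h : IsAlt β) :
    contr (Asym T) β = (k.factorial : ℝ) • contr T β := by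
  funext n
  have hk : (k.factorial : ℝ) ≠ 0 := by positivity
  simp only [contr, Asym, Pi.smul_apply, smul_eq_mul, Finset.sum_mul]
  rw [Finset.sum_comm]
  have : ∀ σ : Equiv.Perm (Fin k), ∑ m : Fin k → Fin 6,
      ((Equiv.Perm.sign σ : ℤ) : ℝ) * T (m ∘ σ) * β (Fin.append m n)
      = ∑ m : Fin k → Fin 6, T m * β (Fin.append m n) := by
    intro σ
    rw [← (Equiv.arrowCongr σ (Equiv.refl (Fin 6))).sum_comp]
    refine Finset.sum_congr rfl fun m _ => ?_
    have e : (Equiv.arrowCongr σ (Equiv.refl (Fin 6))) m = m ∘ (σ⁻¹ : Equiv.Perm (Fin k)) := rfl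
    rw [e, alt_append β h, Function.comp_assoc, Equiv.Perm.sign_inv]
    have e2 : ((σ⁻¹ : Equiv.Perm (Fin k)) : Fin k → Fin k) ∘ σ = id := by
      funext x; simp
    rw [e2, Function.comp_id]
    linear_combination (T m * β (Fin.append m n)) * sgn_sq σ
  simp only [this]
  simp [Fintype.card_perm]
  ring

lemma contr_four (hw : ∀ i, ω i = w (i 0) (i 1)) (F : M) (p : ℕ) (h : IsAlt (F (2 + 2 + p))) :
    contr (wedge ω ω) (F (2 + 2 + p)) = Lam w (Lam w F) p := by
  have hc : ∀ (c : ℝ) (T : Form ℝ 6 (2 + 2)), contr (c • T) (F (2 + 2 + p))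
      = c • contr T (F (2 + 2 + p)) := by
    intro c T
    funext n
    simp only [contr, Pi.smul_apply, smul_eq_mul, Finset.mul_sum]
    exact Finset.sum_congr rfl fun _ _ => by ring
  rw [wedge_asym, hc, contr_asym _ _ h]
  funext n
  simp only [Pi.smul_apply, contr, smul_eq_mul, lam_apply]
  rw [sum_four, ← reindex_M F (show p + 2 + 2 = 2 + 2 + p by omega)]
  simp only [hw, reindex]
  have : ∀ a b c d : Fin 6, Fin.append (![a, b, c, d] : Fin (2 + 2) → Fin 6) n ∘
      Fin.cast (show p + 2 + 2 = 2 + 2 + p by omega)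
      = (Fin.cons a (Fin.cons b (Fin.cons c (Fin.cons d n : Fin (p + 1) → Fin 6) :
        Fin (p + 2) → Fin 6) : Fin (p + 3) → Fin 6) : Fin (p + 4) → Fin 6) := by
    intro a b c d
    funext k
    refine Fin.cases ?_ (fun k => Fin.cases ?_ (fun k => Fin.cases ?_ (fun k =>
      Fin.cases ?_ (fun k => ?_) k) k) k) k
    · exact Fin.append_left (![a, b, c, d] : Fin (2 + 2) → Fin 6) n 0
    · exact Fin.append_left (![a, b, c, d] : Fin (2 + 2) → Fin 6) n 1
    · exact Fin.append_left (![a, b, c, d] : Fin (2 + 2) → Fin 6) n 2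
    · exact Fin.append_left (![a, b, c, d] : Fin (2 + 2) → Fin 6) n 3
    · have : Fin.cast (show p + 2 + 2 = 2 + 2 + p by omega) k.succ.succ.succ.succ
          = Fin.natAdd (2 + 2) k := by
        ext; simp; omega
      simp [this]
  simp only [this]
  have e1 : ∀ (f : Fin 6 → Fin 6 → Fin 6 → Fin 6 → ℝ),
      ∑ c, ∑ d, ∑ r, ∑ s, f c d r s = ∑ r, ∑ s, ∑ c, ∑ d, f c d r s := by
    intro f
    calc ∑ c, ∑ d, ∑ r, ∑ s, f c d r s = ∑ c, ∑ r, ∑ d, ∑ s, f c d r s :=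
          Finset.sum_congr rfl fun c _ => Finset.sum_comm
      _ = ∑ r, ∑ c, ∑ d, ∑ s, f c d r s := Finset.sum_comm
      _ = ∑ r, ∑ c, ∑ s, ∑ d, f c d r s :=
          Finset.sum_congr rfl fun r _ => Finset.sum_congr rfl fun c _ => Finset.sum_comm
      _ = _ := Finset.sum_congr rfl fun r _ => Finset.sum_comm
  simp only [Finset.mul_sum]
  rw [e1]
  refine Finset.sum_congr rfl fun a _ => Finset.sum_congr rfl fun b _ =>
    Finset.sum_congr rfl fun c _ => Finset.sum_congr rfl fun d _ => ?_
  have f0 : (![c, d, a, b] : Fin (2 + 2) → Fin 6) (Fin.castAdd 2 (0 : Fin 2)) = c := rfl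
  have f1 : (![c, d, a, b] : Fin (2 + 2) → Fin 6) (Fin.castAdd 2 (1 : Fin 2)) = d := rfl
  have f2 : (![c, d, a, b] : Fin (2 + 2) → Fin 6) (Fin.natAdd 2 (0 : Fin 2)) = a := rfl
  have f3 : (![c, d, a, b] : Fin (2 + 2) → Fin 6) (Fin.natAdd 2 (1 : Fin 2)) = b := rfl
  rw [f0, f1, f2, f3]
  norm_num [Nat.factorial]
  ring

lemma main (h1 : ∀ a b, w b a = - w a b)
    (h2 : ∀ b d, ∑ a, w a b * w a d = if d = b then 1 else 0)
    (F : M) (h : AltM F) (p : ℕ) :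
    Lam w (Lam w (Lef w F)) p = (2 * ((4 : ℝ) - (p + 2 : ℕ))) • Lam w F p
      + Lef w (Lam w (Lam w F)) p := by
  have c := lam_lef w h1 h2
  have c1 : ∀ G, Lam w (Lef w G) = Lef w (Lam w G) + (3 : ℝ) • G - Num G := fun G => by
    have := congrArg (fun t : Module.End ℝ M => t G) c
    simpa using this
  rw [c1 F, map_sub, map_add, c1 (Lam w F), map_smul]
  simp only [Pi.add_apply, Pi.sub_apply, Pi.smul_apply]
  have e : Lam w (Num F) p = Lam w (((p + 2 : ℕ) : ℝ) • F) p :=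
    lam_local _ _ _ (num_apply _ (h _))
  rw [e, num_apply _ (altM_Lam w h p), map_smul]
  simp only [Pi.smul_apply]
  push_cast
  module

noncomputable def sg {k : ℕ} (α : Form ℝ 6 k) : M :=
  fun q => if h : k = q then reindex h α else 0

lemma sg_self {k : ℕ} (α : Form ℝ 6 k) : sg α k = α := by simp [sg]; rfl

lemma sg_alt {k : ℕ} (α : Form ℝ 6 k) (h : IsAlt α) : AltM (sg α) := by
  intro q
  by_cases hq : k = q
  · subst hq; rw [sg_self]; exact h
  · simp only [sg, hq, dite_false]; intro σ i; simp

lemma lef_alt (F : M) (h : AltM F) (q : ℕ) : IsAlt (Lef w F (q + 2)) := by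
  rw [lef_apply _ _ _ (h _)]
  intro σ i
  simp only [Pi.smul_apply, asym_alt _ σ i, smul_eq_mul]; ring

lemma lef_small (F : M) : Lef w F 0 = 0 ∧ Lef w F 1 = 0 := by
  constructor <;> funext i <;>
  simp [Lef, LinearMap.sum_apply, Finset.sum_apply, ex_zero, ex_succ (p := 0)]

end LefAux

/-- On a 6-dimensional hermitian vector space, for any `k`-form `α` with `k ≥ 2`,
`(ω∧ω) ⌟ (α∧ω) = 2(4-k) ω⌟α + ω ∧ ((ω∧ω)⌟α)` (the last term vanishing for `k < 4`). -/
theorem lefschetz_commutator_second (Jm : Matrix (Fin 6) (Fin 6) ℝ)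
    (hJ2 : Jm * Jm = -1) (hJorth : Jm.transpose * Jm = 1)
    (ω : Form ℝ 6 2) (hω : ∀ i : Fin 2 → Fin 6, ω i = Jm (i 0) (i 1)) :
    (∀ (j : ℕ) (α : Form ℝ 6 (4 + j)), IsAlt α →
      contr (wedge ω ω) (reindex (show (4 + j) + 2 = 4 + (j + 2) by omega) (wedge α ω)) =
        (2 * ((4 : ℝ) - ((4 + j : ℕ) : ℝ))) •
            contr ω (reindex (show 4 + j = 2 + (j + 2) by omega) α)
          + reindex (show 2 + j = j + 2 by omega)
              (wedge ω (contr (wedge ω ω) (reindex (show 4 + j = (2 + 2) + j by omega) α)))) ∧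
    (∀ α : Form ℝ 6 2, IsAlt α →
      contr (wedge ω ω) (reindex (show 2 + 2 = (2 + 2) + 0 by omega) (wedge α ω)) =
        (2 * ((4 : ℝ) - 2)) • contr ω (reindex (show 2 = 2 + 0 by omega) α)) ∧
    (∀ α : Form ℝ 6 3, IsAlt α →
      contr (wedge ω ω) (reindex (show 3 + 2 = (2 + 2) + 1 by omega) (wedge α ω)) =
        (2 * ((4 : ℝ) - 3)) • contr ω (reindex (show 3 = 2 + 1 by omega) α)) := by
  have hJt : Jm.transpose = -Jm := by
    have e : Jm.transpose * Jm * Jm = Jm := by rw [hJorth, one_mul]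
    rw [Matrix.mul_assoc, hJ2, Matrix.mul_neg, Matrix.mul_one] at e
    rw [← e, neg_neg, e]
  have h1 : ∀ a b, Jm b a = - Jm a b := fun a b => by
    have := congrFun (congrFun hJt a) b
    simpa using this
  have h2 : ∀ b d, ∑ a, Jm a b * Jm a d = if d = b then 1 else 0 := fun b d => by
    have := congrFun (congrFun hJorth b) d
    rw [Matrix.mul_apply, Matrix.one_apply] at this
    simpa [eq_comm] using this
  obtain ⟨w, hw⟩ : ∃ w : Fin 6 → Fin 6 → ℝ, ∀ a b, Jm a b = w a b :=
    ⟨fun a b => Jm a b, fun _ _ => rfl⟩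
  simp only [hw] at hω h1 h2
  have key := fun (F : LefAux.M) (h : LefAux.AltM F) => LefAux.main (w := w) h1 h2 F h
  refine ⟨fun j α hα => ?_, fun α hα => ?_, fun α hα => ?_⟩
  · have hF := LefAux.sg_alt α hα
    generalize hG : LefAux.sg α = G at hF
    have e : α = G (4 + j) := by rw [← hG, LefAux.sg_self]
    rw [e, LefAux.wedge_right hω _ _ (hF _)]
    simp only [LefAux.reindex_M]
    have l1 := LefAux.contr_four hω (LefAux.Lef w G) (j + 2)
      (by rw [show 2 + 2 + (j + 2) = j + 4 + 2 by omega]; exact LefAux.lef_alt G hF _)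
    have l2 := LefAux.contr_four hω G j (hF _)
    have l3 := LefAux.wedge_left hω (LefAux.Lam w (LefAux.Lam w G)) j
      (LefAux.altM_Lam _ (LefAux.altM_Lam _ hF) _)
    rw [l2, l3, LefAux.reindex_M, LefAux.contr_two hω]
    refine l1.trans ?_
    rw [key G hF]
    congr 3
    push_cast
    ring
  · have hF := LefAux.sg_alt α hα
    generalize hG : LefAux.sg α = G at hF
    have e : α = G 2 := by rw [← hG, LefAux.sg_self]
    rw [e, LefAux.wedge_right hω _ _ (hF _)]
    simp only [LefAux.reindex_M]
    have l1 := LefAux.contr_four hω (LefAux.Lef w G) 0 (LefAux.lef_alt G hF 2)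
    rw [LefAux.contr_two hω]
    refine l1.trans ?_
    rw [key G hF, (LefAux.lef_small _).1]
    norm_num
  · have hF := LefAux.sg_alt α hα
    generalize hG : LefAux.sg α = G at hF
    have e : α = G 3 := by rw [← hG, LefAux.sg_self]
    rw [e, LefAux.wedge_right hω _ _ (hF _)]
    simp only [LefAux.reindex_M]
    have l1 := LefAux.contr_four hω (LefAux.Lef w G) 1 (LefAux.lef_alt G hF 3)
    rw [LefAux.contr_two hω]
    refine l1.trans ?_
    rw [key G hF, (LefAux.lef_small _).2]
    norm_num
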